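/- Let G = (V, E) be a finite simple graph with vertex capacities C : V → ℤ_{>0}, and let S and O be two capacitated matchings (each vertex v is incident to at most C(v) edges of S, and to at most C(v) edges of O). If every edge of O \ S has at least one endpoint v such that the number of edges of S incident to v is at least C(v)/2, then |O \ S| ≤ 4·|S|. -/

import Mathlib

open Finset

/-- A finite simple graph presented via an abstract edge type: each edge has a
set of exactly two endpoints, and distinct edges have distinct endpoint sets. -/
structure GraphEdges (V E : Type) where
  ends : E → Finset V
  card_ends : ∀ e, (ends e).card = 2
  ends_injective : Function.Injective ends

/-- A capacitated matching: each vertex `v` is incident to at most `C v`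
of its edges. -/
def GraphEdges.IsCapMatching {V E : Type} [DecidableEq V] (G : GraphEdges V E)
    (C : V → ℕ) (M : Finset E) : Prop :=
  ∀ v, (M.filter (fun e => v ∈ G.ends e)).card ≤ C v

/-!
Charge each edge of `T = O \ S` to an endpoint `v` of large `S`-degree. Such a vertex receives at
most `deg_T v ≤ C v ≤ 2 * deg_S v` charges, and the `S`-degrees sum to at most `2 * |S|` because
every edge has two endpoints.
-/

section Hypergraph

variable {V E : Type*} [DecidableEq V] {ends : E → Finset V}

theorem sum_card_filter_mem_ends_le_mul_card {S : Finset E} {r : ℕ}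
    (hr : ∀ f ∈ S, #(ends f) ≤ r) (W : Finset V) :
    ∑ v ∈ W, #{f ∈ S | v ∈ ends f} ≤ r * #S :=
  calc
    ∑ v ∈ W, #{f ∈ S | v ∈ ends f} = ∑ f ∈ S, #{v ∈ W | v ∈ ends f} :=
      sum_card_bipartiteAbove_eq_sum_card_bipartiteBelow fun v f ↦ v ∈ ends f
    _ ≤ ∑ f ∈ S, #(ends f) :=
      sum_le_sum fun _ _ ↦ card_le_card fun _ hv ↦ (mem_filter.mp hv).2
    _ ≤ #S * r := sum_le_card_nsmul S _ r hr
    _ = r * #S := mul_comm _ _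

theorem card_le_sum_card_filter_mem_ends {T : Finset E} {W : Finset V}
    (hW : ∀ e ∈ T, ∃ v ∈ W, v ∈ ends e) :
    #T ≤ ∑ v ∈ W, #{e ∈ T | v ∈ ends e} :=
  calc
    #T = ∑ _e ∈ T, 1 := card_eq_sum_ones T
    _ ≤ ∑ e ∈ T, #{v ∈ W | v ∈ ends e} :=
      sum_le_sum fun e he ↦ card_pos.mpr (filter_nonempty_iff.mpr (hW e he))
    _ = ∑ v ∈ W, #{e ∈ T | v ∈ ends e} :=
      (sum_card_bipartiteAbove_eq_sum_card_bipartiteBelow fun v e ↦ v ∈ ends e).symm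

theorem cap_charging_general {S T : Finset E} {r k : ℕ} (hr : ∀ f ∈ S, #(ends f) ≤ r)
    (h : ∀ e ∈ T, ∃ v ∈ ends e, #{f ∈ T | v ∈ ends f} ≤ k * #{f ∈ S | v ∈ ends f}) :
    #T ≤ k * r * #S := by
  let W := {v ∈ T.biUnion ends | #{f ∈ T | v ∈ ends f} ≤ k * #{f ∈ S | v ∈ ends f}}
  have covered : ∀ e ∈ T, ∃ v ∈ W, v ∈ ends e := fun e he ↦ by
    obtain ⟨v, hv, hle⟩ := h e he
    exact ⟨v, mem_filter.mpr ⟨mem_biUnion.mpr ⟨e, he, hv⟩, hle⟩, hv⟩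
  calc
    #T ≤ ∑ v ∈ W, #{e ∈ T | v ∈ ends e} := card_le_sum_card_filter_mem_ends covered
    _ ≤ ∑ v ∈ W, k * #{f ∈ S | v ∈ ends f} := sum_le_sum fun _ hv ↦ (mem_filter.mp hv).2
    _ = k * ∑ v ∈ W, #{f ∈ S | v ∈ ends f} := (mul_sum ..).symm
    _ ≤ k * (r * #S) := Nat.mul_le_mul_left k (sum_card_filter_mem_ends_le_mul_card hr W)
    _ = k * r * #S := (mul_assoc ..).symm

end Hypergraph

theorem GraphEdges.IsCapMatching.mono {V E : Type} [DecidableEq V] {G : GraphEdges V E}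
    {C : V → ℕ} {M N : Finset E} (hN : G.IsCapMatching C N) (hMN : M ⊆ N) :
    G.IsCapMatching C M :=
  fun v ↦ (card_le_card (filter_subset_filter _ hMN)).trans (hN v)

/-- If `S` and `O` are capacitated matchings and every edge
of `O \ S` has an endpoint `v` whose `S`-degree is at least `C v / 2`,
then `|O \ S| ≤ 4|S|`. -/
theorem cap_charging
    {V E : Type} [DecidableEq V] [DecidableEq E]
    (G : GraphEdges V E) (C : V → ℕ) (hC : ∀ v, 0 < C v)
    (S O : Finset E)
    (hS : G.IsCapMatching C S) (hO : G.IsCapMatching C O)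
    (h : ∀ e ∈ O \ S, ∃ v ∈ G.ends e,
        C v ≤ 2 * (S.filter (fun f => v ∈ G.ends f)).card) :
    (O \ S).card ≤ 4 * S.card := by
  refine cap_charging_general (r := 2) (k := 2) (fun f _ ↦ (G.card_ends f).le) fun e he ↦ ?_
  obtain ⟨v, hv, hCv⟩ := h e he
  exact ⟨v, hv, (hO.mono sdiff_subset v).trans hCv⟩
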